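/- For every multi-level apportionment instance whose tree is a full binary tree (every node has exactly 0 or 2 children) and every non-negative integer h, there exists an allocation of h seats that fulfills both upper quota and lower quota. -/

import Mathlib

/-- A multi-level apportionment instance: a rooted tree on nodes `0, …, n`
(root `0`, encoded by a parent function with `parent i < i` for `i ≠ 0`),
together with entitlements `W`. -/
structure MLA where
  n : ℕ
  parent : Fin (n + 1) → Fin (n + 1)
  parent_lt : ∀ i : Fin (n + 1), i ≠ 0 → (parent i : ℕ) < (i : ℕ)
  W : Fin (n + 1) → ℝ
  W_pos : ∀ i, 0 < W i
  W_le_one : ∀ i, W i ≤ 1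
  W_root : W 0 = 1
  W_sum : ∀ i : Fin (n + 1),
    (Finset.univ.filter (fun c => c ≠ 0 ∧ parent c = i)).Nonempty →
    ∑ c ∈ Finset.univ.filter (fun c => c ≠ 0 ∧ parent c = i), W c = 1

namespace MLA

variable (T : MLA)

/-- The set of children of node `i`. -/
def children (i : Fin (T.n + 1)) : Finset (Fin (T.n + 1)) :=
  Finset.univ.filter (fun c => c ≠ 0 ∧ T.parent c = i)

/-- The ancestor set `A(i)`: `A(0) = {0}` and `A(i) = {parent i} ∪ A(parent i)`. -/
def ancestors (i : Fin (T.n + 1)) : Finset (Fin (T.n + 1)) :=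
  if h : i = 0 then {0} else insert (T.parent i) (ancestors (T.parent i))
termination_by (i : ℕ)
decreasing_by exact T.parent_lt i h

/-- The entitlement of node `i` relative to the root: `R i = ∏_{a ∈ A(i) ∪ {i}} W a`. -/
def R (i : Fin (T.n + 1)) : ℝ := ∏ a ∈ insert i (T.ancestors i), T.W a

/-- `V` is an allocation of `h` seats. -/
def IsAlloc (h : ℕ) (V : Fin (T.n + 1) → ℕ) : Prop :=
  V 0 = h ∧ ∀ i, (T.children i).Nonempty → V i = ∑ c ∈ T.children i, V c

/-- `V` fulfills lower quota: `V i ≥ LQ i = max_{a ∈ A(i)} ⌊(R i / R a) · V a⌋`. -/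
def FulfillsLowerQuota (V : Fin (T.n + 1) → ℕ) : Prop :=
  ∀ i, ∀ a ∈ T.ancestors i, ⌊T.R i / T.R a * (V a : ℝ)⌋ ≤ (V i : ℤ)

/-- `V` fulfills upper quota: `V i ≤ UQ i = min_{a ∈ A(i)} ⌈(R i / R a) · V a⌉`. -/
def FulfillsUpperQuota (V : Fin (T.n + 1) → ℕ) : Prop :=
  ∀ i, ∀ a ∈ T.ancestors i, (V i : ℤ) ≤ ⌈T.R i / T.R a * (V a : ℝ)⌉


/-- `P` is the set of nodes receiving the new seat in one step of an iterative
method with selection criterion `crit` (to be minimized among children) and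
eligibility constraint `elig`: `P` is a root-to-leaf path, each non-root node on
the path is an eligible child of its parent minimizing `crit` among all eligible
children, and the seat counts along `P` each increase by one. -/
def IsStepWith (crit : (Fin (T.n + 1) → ℕ) → Fin (T.n + 1) → ℝ)
    (elig : (Fin (T.n + 1) → ℕ) → Fin (T.n + 1) → Prop)
    (P : Finset (Fin (T.n + 1))) (Vh Vh1 : Fin (T.n + 1) → ℕ) : Prop :=
  (0 : Fin (T.n + 1)) ∈ P ∧
  (∀ i ∈ P, i ≠ 0 → T.parent i ∈ P) ∧
  (∀ i ∈ P, (T.children i).Nonempty → ∃ c ∈ T.children i, c ∈ P) ∧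
  (∀ c ∈ P, ∀ d ∈ P, c ≠ 0 → d ≠ 0 → T.parent c = T.parent d → c = d) ∧
  (∀ c ∈ P, c ≠ 0 → elig Vh c ∧
    ∀ d ∈ T.children (T.parent c), elig Vh d → crit Vh c ≤ crit Vh d) ∧
  (∀ i, Vh1 i = Vh i + if i ∈ P then 1 else 0)

/-- `V : ℕ → (nodes → ℕ)` is a run of the iterative method given by `crit` and
`elig` (with arbitrary tie-breaking): `V 0` is the all-zero allocation and each
`V (h+1)` is obtained from `V h` by allocating one more seat along a path. -/
def IsRun (crit : (Fin (T.n + 1) → ℕ) → Fin (T.n + 1) → ℝ)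
    (elig : (Fin (T.n + 1) → ℕ) → Fin (T.n + 1) → Prop)
    (V : ℕ → Fin (T.n + 1) → ℕ) : Prop :=
  (∀ i, V 0 i = 0) ∧ ∀ h, ∃ P, T.IsStepWith crit elig P (V h) (V (h + 1))

/-- Adams' criterion: a child `c` minimizing `V c / R c` receives the seat. -/
noncomputable def adamsCrit (V : Fin (T.n + 1) → ℕ) (c : Fin (T.n + 1)) : ℝ :=
  (V c : ℝ) / T.R c

/-- Jefferson's criterion: a child `c` minimizing `(V c + 1) / R c` receives the seat. -/
noncomputable def jeffersonCrit (V : Fin (T.n + 1) → ℕ) (c : Fin (T.n + 1)) : ℝ :=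
  ((V c : ℝ) + 1) / T.R c

/-- Trivial eligibility constraint: every child is eligible. -/
def trivElig (_ : Fin (T.n + 1) → ℕ) (_ : Fin (T.n + 1)) : Prop := True

/-- Eligibility constraint of the quota method: `V c / W c < V (parent c) + 1`. -/
def quotaElig (V : Fin (T.n + 1) → ℕ) (c : Fin (T.n + 1)) : Prop :=
  (V c : ℝ) / T.W c < (V (T.parent c) : ℝ) + 1

/-- Eligibility constraint of the upper-compliant quota method:
`V c / R c < (V a + 1) / R a` for every ancestor `a` of `c`. -/
def ucElig (V : Fin (T.n + 1) → ℕ) (c : Fin (T.n + 1)) : Prop :=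
  ∀ a ∈ T.ancestors c, (V c : ℝ) / T.R c < ((V a : ℝ) + 1) / T.R a

end MLA

/-- The tree of `T` is a full binary tree: every node has 0 or 2 children. -/
def MLA.FullBinary (T : MLA) : Prop :=
  ∀ i, (T.children i).card = 0 ∨ (T.children i).card = 2

/-!
Seats are handed down from the root, keeping `|V j - (R j / R a) * V a| < 1` for every node `j`
and every ancestor `a` of `j`; for integers `V j` this is exactly lower and upper quota. At a node
`i` with children `c` and `d`, the shares `x a = (R i / R a) * V a` that the nodes `a` on the path
to `i` claim for `i` are pairwise at distance less than `1`. A number `k` of seats is fine for `c`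
when it is at distance less than `1` from each `W c * x a`, and `V i - k` is fine for `d` when `k`
is at distance less than `1` from each `V i - W d * x a`. Since `W c + W d = 1`, all these numbers
are again pairwise at distance less than `1`, so the integer part of the largest one serves as `k`.
-/

theorem abs_intCast_sub_lt_one_iff {z : ℤ} {x : ℝ} :
    |(z : ℝ) - x| < 1 ↔ z ≤ ⌈x⌉ ∧ ⌊x⌋ ≤ z := by
  rw [abs_sub_lt_iff, Int.le_ceil_iff, Int.floor_le_iff]
  exact and_congr sub_lt_comm sub_lt_iff_lt_add'

theorem abs_convex_combination_lt_one {a b w w' : ℝ} (hw : 0 ≤ w) (hw' : 0 ≤ w')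
    (hww' : w + w' = 1) (ha : |a| < 1) (hb : |b| < 1) : |w * a + w' * b| < 1 := by
  rw [← Real.norm_eq_abs, ← mem_ball_zero_iff] at *
  exact convex_ball 0 1 ha hb hw hw' hww'

theorem exists_int_forall_abs_sub_lt_one {S : Finset ℝ}
    (hS : ∀ x ∈ S, ∀ y ∈ S, |x - y| < 1) : ∃ k : ℤ, ∀ x ∈ S, |(k : ℝ) - x| < 1 := by
  rcases S.eq_empty_or_nonempty with rfl | hne
  · simp
  refine ⟨⌊S.max' hne⌋, fun x hx => abs_sub_lt_iff.2 ⟨?_, ?_⟩⟩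
  · linarith [Int.floor_le (S.max' hne), (abs_lt.1 (hS _ (S.max'_mem hne) x hx)).2]
  · linarith [Int.lt_floor_add_one (S.max' hne), S.le_max' x hx]

theorem exists_int_forall_abs_sub_mul_lt_one {S : Finset ℝ} {v w w' : ℝ} (hw : 0 ≤ w)
    (hw' : 0 ≤ w') (hww' : w + w' = 1) (hv : v ∈ S) (hS : ∀ x ∈ S, ∀ y ∈ S, |x - y| < 1) :
    ∃ k : ℤ, ∀ x ∈ S, |k - w * x| < 1 ∧ |v - k - w' * x| < 1 := by
  have hcross : ∀ x ∈ S, ∀ y ∈ S, |w * x - (v - w' * y)| < 1 := fun x hx y hy => by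
    convert abs_convex_combination_lt_one hw hw' hww' (hS x hx v hv) (hS y hy v hv) using 2
    linear_combination v * hww'
  obtain ⟨k, hk⟩ := exists_int_forall_abs_sub_lt_one
    (S := S.image (w * ·) ∪ S.image (v - w' * ·)) <| by
      simp only [Finset.mem_union, Finset.mem_image]
      rintro _ (⟨x, hx, rfl⟩ | ⟨x, hx, rfl⟩) _ (⟨y, hy, rfl⟩ | ⟨y, hy, rfl⟩)
      · convert abs_convex_combination_lt_one hw hw' hww' (hS x hx y hy)
          (abs_zero.trans_lt one_pos) using 2
        ring
      · exact hcross x hx y hy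
      · exact (abs_sub_comm _ _).trans_lt (hcross y hy x hx)
      · convert abs_convex_combination_lt_one hw hw' hww' (abs_zero.trans_lt one_pos)
          (hS y hy x hx) using 2
        ring
  simp only [Finset.forall_mem_union, Finset.forall_mem_image] at hk
  refine ⟨k, fun x hx => ⟨hk.1 hx, ?_⟩⟩
  rw [sub_right_comm, abs_sub_comm]
  exact hk.2 hx

theorem exists_add_eq_forall_abs_sub_mul_lt_one {S : Finset ℝ} {v : ℕ} {w w' : ℝ} (hw : 0 ≤ w)
    (hw' : 0 ≤ w') (hww' : w + w' = 1) (hv : (v : ℝ) ∈ S)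
    (hS : ∀ x ∈ S, ∀ y ∈ S, |x - y| < 1) :
    ∃ k l : ℕ, k + l = v ∧ ∀ x ∈ S, |k - w * x| < 1 ∧ |l - w' * x| < 1 := by
  obtain ⟨k, hk⟩ := exists_int_forall_abs_sub_mul_lt_one hw hw' hww' hv hS
  have nonneg_of_abs_sub_lt {z : ℤ} {u : ℝ} (hu : 0 ≤ u) (hz : |(z : ℝ) - u * v| < 1) :
      0 ≤ z :=
    (Int.floor_nonneg.2 (mul_nonneg hu v.cast_nonneg)).trans (abs_intCast_sub_lt_one_iff.1 hz).2
  have hk0 : 0 ≤ k := nonneg_of_abs_sub_lt hw (hk v hv).1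
  have hl0 : 0 ≤ v - k := nonneg_of_abs_sub_lt hw' (by exact_mod_cast (hk v hv).2)
  lift k to ℕ using hk0
  obtain ⟨l, rfl⟩ := Nat.exists_eq_add_of_le (Int.ofNat_le.1 (sub_nonneg.1 hl0))
  exact ⟨k, l, rfl, fun x hx => by simpa using hk x hx⟩

namespace MLA

variable {T : MLA} {V V' : Fin (T.n + 1) → ℕ} {i j : Fin (T.n + 1)}

theorem mem_children : j ∈ T.children i ↔ j ≠ 0 ∧ T.parent j = i := by
  simp [children]

theorem lt_of_mem_children (hj : j ∈ T.children i) : i < j := by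
  obtain ⟨hj0, rfl⟩ := mem_children.1 hj
  exact T.parent_lt j hj0

theorem sum_W_children (hi : (T.children i).Nonempty) : ∑ c ∈ T.children i, T.W c = 1 :=
  T.W_sum i hi

@[elab_as_elim]
theorem induction_on_parent {P : Fin (T.n + 1) → Prop} (i : Fin (T.n + 1)) (zero : P 0)
    (child : ∀ i, i ≠ 0 → P (T.parent i) → P i) : P i := by
  induction i using WellFoundedLT.induction with
  | ind i ih =>
    by_cases hi : i = 0
    · exact hi ▸ zero
    · exact child i hi (ih _ (T.parent_lt i hi))

variable (T) in
/-- The nodes on the path from the root to `i`, that is, `A(i) ∪ {i}`. -/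
def path (i : Fin (T.n + 1)) : Finset (Fin (T.n + 1)) := insert i (T.ancestors i)

theorem self_mem_path : i ∈ T.path i := Finset.mem_insert_self _ _

theorem ancestors_zero : T.ancestors 0 = {0} := by
  rw [ancestors, dif_pos rfl]

theorem ancestors_eq_path_parent (hi : i ≠ 0) : T.ancestors i = T.path (T.parent i) := by
  rw [ancestors, dif_neg hi, path]

theorem path_zero : T.path 0 = {0} := by
  simp [path, ancestors_zero]

theorem path_eq_insert (hi : i ≠ 0) : T.path i = insert i (T.path (T.parent i)) := by
  rw [path, ancestors_eq_path_parent hi]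

theorem le_of_mem_path (hj : j ∈ T.path i) : j ≤ i := by
  induction i using induction_on_parent with
  | zero => exact (Finset.mem_singleton.1 (path_zero ▸ hj)).le
  | child i hi ih =>
    rw [path_eq_insert hi, Finset.mem_insert] at hj
    exact hj.elim le_of_eq fun hj => (ih hj).trans (T.parent_lt i hi).le

theorem R_pos (i : Fin (T.n + 1)) : 0 < T.R i :=
  Finset.prod_pos fun a _ => T.W_pos a

theorem R_eq_W_mul_R_parent (hi : i ≠ 0) : T.R i = T.W i * T.R (T.parent i) := by
  have hnotMem : i ∉ T.path (T.parent i) := fun h =>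
    (le_of_mem_path h).not_gt (T.parent_lt i hi)
  rw [R, ancestors_eq_path_parent hi, Finset.prod_insert hnotMem, path, R]

variable (T) in
/-- The share `(R i / R a) * V a` of the seats of `a` to which `i` is entitled, when `a` lies on
the path to `i`. -/
noncomputable def share (V : Fin (T.n + 1) → ℕ) (i a : Fin (T.n + 1)) : ℝ :=
  T.R i / T.R a * V a

theorem share_self : T.share V i i = V i := by
  rw [share, div_self (R_pos i).ne', one_mul]

theorem share_eq_W_mul_share_parent (hi : i ≠ 0) (a : Fin (T.n + 1)) :
    T.share V i a = T.W i * T.share V (T.parent i) a := by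
  rw [share, share, R_eq_W_mul_R_parent hi, mul_div_assoc, mul_assoc]

variable (T) in
/-- Node `i` meets lower and upper quota with respect to all of its ancestors, with floors and
ceilings rewritten as a strict distance bound; see `forall_isWithinQuota_iff`. -/
def IsWithinQuota (V : Fin (T.n + 1) → ℕ) (i : Fin (T.n + 1)) : Prop :=
  ∀ a ∈ T.ancestors i, |V i - T.share V i a| < 1

theorem forall_isWithinQuota_iff :
    (∀ i, T.IsWithinQuota V i) ↔ T.FulfillsUpperQuota V ∧ T.FulfillsLowerQuota V := by
  simp only [IsWithinQuota, FulfillsUpperQuota, FulfillsLowerQuota, share, ← forall_and,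
    ← abs_intCast_sub_lt_one_iff, Int.cast_natCast]

theorem isWithinQuota_zero : T.IsWithinQuota V 0 := by
  simp [IsWithinQuota, ancestors_zero, share_self]

theorem abs_share_sub_share_lt_one (hV : ∀ j ∈ T.path i, T.IsWithinQuota V j) :
    ∀ a ∈ T.path i, ∀ b ∈ T.path i, |T.share V i a - T.share V i b| < 1 := by
  induction i using induction_on_parent with
  | zero => simp [path_zero]
  | child i hi ih =>
    have hself : ∀ a ∈ T.path (T.parent i), |T.share V i i - T.share V i a| < 1 := by
      rw [share_self, ← ancestors_eq_path_parent hi]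
      exact hV i self_mem_path
    rw [path_eq_insert hi] at hV ⊢
    simp only [Finset.forall_mem_insert, sub_self, abs_zero, zero_lt_one, true_and]
    refine ⟨hself, fun a ha => ⟨(abs_sub_comm _ _).trans_lt (hself a ha), fun b hb => ?_⟩⟩
    rw [share_eq_W_mul_share_parent hi, share_eq_W_mul_share_parent hi, ← mul_sub, abs_mul,
      abs_of_pos (T.W_pos i)]
    exact mul_lt_one_of_nonneg_of_lt_one_right (T.W_le_one i) (abs_nonneg _)
      (ih (fun j hj => hV j (Finset.mem_insert_of_mem hj)) a ha b hb)

variable (T) in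
/-- The seats of `i` are distributed among its children so that each child is within quota. -/
structure SplitsWithinQuota (V : Fin (T.n + 1) → ℕ) (i : Fin (T.n + 1)) : Prop where
  eq_sum_children : (T.children i).Nonempty → V i = ∑ c ∈ T.children i, V c
  isWithinQuota : ∀ c ∈ T.children i, T.IsWithinQuota V c

theorem isWithinQuota_of_splitsWithinQuota_parent
    (hV : j ≠ 0 → T.SplitsWithinQuota V (T.parent j)) : T.IsWithinQuota V j := by
  by_cases hj : j = 0
  · exact hj ▸ isWithinQuota_zero
  · exact (hV hj).isWithinQuota j (mem_children.2 ⟨hj, rfl⟩)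

theorem isWithinQuota_iff_of_mem_children {c : Fin (T.n + 1)} (hc : c ∈ T.children i) :
    T.IsWithinQuota V c ↔ ∀ a ∈ T.path i, |V c - T.W c * T.share V i a| < 1 := by
  obtain ⟨hc0, rfl⟩ := mem_children.1 hc
  simp only [IsWithinQuota, ancestors_eq_path_parent hc0, share_eq_W_mul_share_parent hc0]

theorem SplitsWithinQuota.congr (hV : T.SplitsWithinQuota V i)
    (hV' : ∀ j, (j ≠ 0 → T.parent j ≤ i) → V' j = V j) : T.SplitsWithinQuota V' i := by
  have eq_of_le {a : Fin (T.n + 1)} (ha : a ≤ i) : V' a = V a :=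
    hV' a fun ha0 => (T.parent_lt a ha0).le.trans ha
  have eq_of_mem_children {c : Fin (T.n + 1)} (hc : c ∈ T.children i) : V' c = V c :=
    hV' c fun _ => (mem_children.1 hc).2.le
  constructor
  · intro hi
    rw [eq_of_le le_rfl, hV.eq_sum_children hi]
    exact Finset.sum_congr rfl fun c hc => (eq_of_mem_children hc).symm
  · intro c hc
    have hcV := hV.isWithinQuota c hc
    rw [isWithinQuota_iff_of_mem_children hc] at hcV ⊢
    intro a ha
    rw [eq_of_mem_children hc, share, eq_of_le (le_of_mem_path ha)]
    exact hcV a ha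

theorem exists_extend_splitsWithinQuota_of_children_eq_pair {c d : Fin (T.n + 1)} (hcd : c ≠ d)
    (hchildren : T.children i = {c, d}) (hV : ∀ j ∈ T.path i, T.IsWithinQuota V j) :
    ∃ V', (∀ j ∉ T.children i, V' j = V j) ∧ T.SplitsWithinQuota V' i := by
  have hW : T.W c + T.W d = 1 := by
    rw [← Finset.sum_pair hcd, ← hchildren]
    exact sum_W_children (by simp [hchildren])
  obtain ⟨k, l, hkl, hquota⟩ := exists_add_eq_forall_abs_sub_mul_lt_one
    (S := (T.path i).image (T.share V i)) (v := V i) (T.W_pos c).le (T.W_pos d).le hW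
    (Finset.mem_image.2 ⟨i, self_mem_path, share_self⟩)
    (by simpa only [Finset.forall_mem_image] using abs_share_sub_share_lt_one hV)
  let V' := Function.update (Function.update V c k) d l
  have hV'c : V' c = k := by simp [V', hcd]
  have hV'd : V' d = l := by simp [V']
  have hV' : ∀ j ∉ T.children i, V' j = V j := fun j hj => by
    simp only [hchildren, Finset.mem_insert, Finset.mem_singleton, not_or] at hj
    simp [V', hj]
  have eq_of_le {a : Fin (T.n + 1)} (ha : a ≤ i) : V' a = V a :=
    hV' a fun hmem => (lt_of_mem_children hmem).not_ge ha
  refine ⟨V', hV', fun _ => ?_, fun e he => ?_⟩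
  · rw [hchildren, Finset.sum_pair hcd, hV'c, hV'd, hkl, eq_of_le le_rfl]
  · rw [isWithinQuota_iff_of_mem_children he]
    intro a ha
    have hquota_a := hquota _ (Finset.mem_image_of_mem _ ha)
    rw [share, eq_of_le (le_of_mem_path ha), ← share]
    rw [hchildren, Finset.mem_insert, Finset.mem_singleton] at he
    rcases he with rfl | rfl
    · exact hV'c ▸ hquota_a.1
    · exact hV'd ▸ hquota_a.2

theorem FullBinary.exists_extend_splitsWithinQuota (hbin : T.FullBinary)
    (hV : ∀ j ∈ T.path i, T.IsWithinQuota V j) :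
    ∃ V', (∀ j ∉ T.children i, V' j = V j) ∧ T.SplitsWithinQuota V' i := by
  rcases hbin i with hleaf | hpair
  · rw [Finset.card_eq_zero] at hleaf
    exact ⟨V, fun _ _ => rfl, by simp [hleaf], by simp [hleaf]⟩
  · obtain ⟨c, d, hcd, hchildren⟩ := Finset.card_eq_two.1 hpair
    exact exists_extend_splitsWithinQuota_of_children_eq_pair hcd hchildren hV

theorem FullBinary.exists_forall_lt_splitsWithinQuota (hbin : T.FullBinary) (h m : ℕ) :
    ∃ V, V 0 = h ∧ ∀ i : Fin (T.n + 1), (i : ℕ) < m → T.SplitsWithinQuota V i := by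
  induction m with
  | zero => exact ⟨fun _ => h, rfl, fun i hi => absurd hi i.val.not_lt_zero⟩
  | succ m ih =>
    obtain ⟨V, hroot, hV⟩ := ih
    rcases le_or_gt (T.n + 1) m with hm | hm
    · exact ⟨V, hroot, fun i _ => hV i (i.isLt.trans_le hm)⟩
    let k : Fin (T.n + 1) := ⟨m, hm⟩
    have hpath : ∀ j ∈ T.path k, T.IsWithinQuota V j := fun j hj =>
      isWithinQuota_of_splitsWithinQuota_parent fun hj0 =>
        hV _ ((T.parent_lt j hj0).trans_le (le_of_mem_path hj))
    obtain ⟨V', hV'V, hV'k⟩ := hbin.exists_extend_splitsWithinQuota hpath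
    refine ⟨V', ?_, fun i hi => ?_⟩
    · rw [hV'V 0 fun h0 => (mem_children.1 h0).1 rfl, hroot]
    · rcases Nat.lt_succ_iff_lt_or_eq.1 hi with him | him
      · refine (hV i him).congr fun j hj => hV'V j fun hjk => ?_
        obtain ⟨hj0, hparent⟩ := mem_children.1 hjk
        exact (hj hj0).not_gt (hparent ▸ him)
      · rwa [show i = k from Fin.ext him]

end MLA

/-- For every full-binary-tree instance and every `h`, there
exists an allocation of `h` seats fulfilling both upper and lower quota. -/
theorem exists_alloc_within_both_quotas_full_binary (T : MLA) (hbin : T.FullBinary)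
    (h : ℕ) :
    ∃ V : Fin (T.n + 1) → ℕ,
      T.IsAlloc h V ∧ T.FulfillsUpperQuota V ∧ T.FulfillsLowerQuota V := by
  obtain ⟨V, hroot, hV⟩ := hbin.exists_forall_lt_splitsWithinQuota h (T.n + 1)
  refine ⟨V, ⟨hroot, fun i => (hV i i.isLt).eq_sum_children⟩, MLA.forall_isWithinQuota_iff.1 ?_⟩
  exact fun i => MLA.isWithinQuota_of_splitsWithinQuota_parent fun _ => hV _ (Fin.isLt _)
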